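/- For every n ≥ 2, the affine braid group B(Ã_{n−1}) is torsion-free: if g ∈ B(Ã_{n−1}) and g^k = 1 for some integer k ≥ 1, then g = 1. -/

import Mathlib

/-- The braid relation word `s_i s_j s_i (s_j s_i s_j)⁻¹` in a free group. -/
def braidRelWord {I : Type*} (i j : I) : FreeGroup I :=
  FreeGroup.of i * FreeGroup.of j * FreeGroup.of i *
    (FreeGroup.of j * FreeGroup.of i * FreeGroup.of j)⁻¹

/-- The commutation relation word `s_i s_j (s_j s_i)⁻¹` in a free group. -/
def commRelWord {I : Type*} (i j : I) : FreeGroup I :=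
  FreeGroup.of i * FreeGroup.of j * (FreeGroup.of j * FreeGroup.of i)⁻¹

/-- The defining relations of the affine braid group `B(Ã_{n-1})`: for `n ≥ 3` the braid
relations `s_i s_{i+1} s_i = s_{i+1} s_i s_{i+1}` (`i ∈ ℤ/n`) and the commutation relations
`s_i s_j = s_j s_i` for `i - j ≠ ±1`; for `n = 2` there are no relations, so that
`B(Ã_1)` is the free group on two generators. -/
def affineBraidRels (n : ℕ) : Set (FreeGroup (ZMod n)) :=
  if n ≤ 2 then ∅
  else {r | (∃ i : ZMod n, r = braidRelWord i (i + 1)) ∨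
            (∃ i j : ZMod n, i - j ≠ 1 ∧ i - j ≠ -1 ∧ r = commRelWord i j)}

/-- The affine braid group `B(Ã_{n-1})`. -/
abbrev AffineBraidGroup (n : ℕ) := PresentedGroup (affineBraidRels n)

/-- The generator `s_i` of the affine braid group `B(Ã_{n-1})`, `i ∈ ℤ/n`. -/
def affineBraidGen (n : ℕ) (i : ZMod n) : AffineBraidGroup n := PresentedGroup.of i

/-!
Let `A` be the Artin monoid of a triangle-free simply laced Coxeter graph. By Garside's lemma `A` is
cancellative, and two elements with a common multiple have a least one. If moreover `A` has a
central element divisible by every generator, as for the braid groups the power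
`(σ₀ ⋯ σₘ) ^ (m + 2)`, then all least common multiples exist and `A` embeds in its Artin group. A
torsion element of the Artin group becomes, after multiplication by a central power, an equality
`x ^ k = y ^ k` between commuting elements of `A`. The least common multiple `l` of the elements
`x ^ i * y ^ j` with `i + j = k` then satisfies `x * l = y * l`, whence `x = y`.

For `n ≤ 2` the affine braid group is free. For `n ≥ 3` it embeds in a braid group: the conjugates
of `σ₁` by the powers of `t = σ₀² σ₁ ⋯ σₙ₋₁` satisfy the affine braid relations. For injectivity,
the braids fixing the position of one strand form the annular braid group, which maps to the
extension of the affine braid group by the rotation of its diagram. The action of the braid group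
induced from the left regular action of this extension recovers each affine braid from its image.
-/

/-! ### Least common multiples -/

/-- `l` is a least common right multiple of the set `S`, where `x ∣ w` means that `x` is a left
divisor of `w`. -/
def IsLcm {M : Type*} [Monoid M] (S : Set M) (l : M) : Prop :=
  ∀ w, l ∣ w ↔ ∀ x ∈ S, x ∣ w

section Lcm

variable {M : Type*} [Monoid M]

theorem isLcm_pair {x y l : M} : IsLcm {x, y} l ↔ ∀ w, l ∣ w ↔ x ∣ w ∧ y ∣ w := by
  simp only [IsLcm, Set.mem_insert_iff, Set.mem_singleton_iff, forall_eq_or_imp, forall_eq]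

theorem IsLcm.dvd {S : Set M} {l x : M} (h : IsLcm S l) (hx : x ∈ S) : x ∣ l :=
  (h l).1 dvd_rfl x hx

theorem mul_dvd_mul_iff_left_of_cancel [IsLeftCancelMul M] {u v w : M} :
    u * v ∣ u * w ↔ v ∣ w := by
  simp only [Dvd.dvd, mul_assoc, mul_right_inj]

theorem dvd_antisymm_of_subsingleton_units [IsLeftCancelMul M] [Subsingleton Mˣ] {x y : M}
    (hxy : x ∣ y) (hyx : y ∣ x) : x = y := by
  obtain ⟨u, rfl⟩ := hxy
  obtain ⟨v, hv⟩ := hyx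
  rw [mul_assoc, left_eq_mul] at hv
  have hu : u = 1 := congrArg Units.val (Subsingleton.elim (Units.mkOfMulEqOne u v hv) 1)
  rw [hu, mul_one]

theorem IsLcm.mul_dvd [IsLeftCancelMul M] {S : Set M} {c l w : M} (h : IsLcm S l)
    (hS : S.Nonempty) (hw : ∀ x ∈ S, c * x ∣ w) : c * l ∣ w := by
  obtain ⟨x, hx⟩ := hS
  obtain ⟨v, rfl⟩ := dvd_of_mul_right_dvd (hw x hx)
  simpa only [mul_dvd_mul_iff_left_of_cancel, h v] using hw

theorem exists_isLcm_of_finite (hM : ∀ x y : M, ∃ l, IsLcm {x, y} l) {S : Set M}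
    (hS : S.Finite) : ∃ l, IsLcm S l := by
  induction S, hS using Set.Finite.induction_on with
  | empty => exact ⟨1, fun w => by simp⟩
  | @insert x S _ _ ih =>
    obtain ⟨l, hl⟩ := ih
    obtain ⟨m, hm⟩ := hM x l
    exact ⟨m, fun w => by rw [isLcm_pair.1 hm w, hl w, Set.forall_mem_insert]⟩

/-- Least common multiples paste: `a * x` and `b * y` are completed in the square with sides
`a`, `p`, `b`, `q`, followed by the squares completing `x`, `p` and `y`, `q`. -/
theorem IsLcm.paste [IsLeftCancelMul M] {a b x y p q u v l : M} (hpq : a * p = b * q)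
    (hab : IsLcm {a, b} (a * p)) (hx : IsLcm {x, p} (p * u)) (hy : IsLcm {y, q} (q * v))
    (hl : IsLcm {u, v} l) : IsLcm {a * x, b * y} (a * p * l) := by
  have dvd_l {c z r s t : M} (hz : IsLcm {z, r} (r * s)) (hs : c * r = a * p) :
      c * z ∣ a * p * t ↔ s ∣ t := by
    rw [← hs, mul_assoc, mul_dvd_mul_iff_left_of_cancel,
      ← mul_dvd_mul_iff_left_of_cancel (u := r) (v := s), isLcm_pair.1 hz,
      and_iff_left (dvd_mul_right r t)]
  have key (t : M) : a * p * l ∣ a * p * t ↔ a * x ∣ a * p * t ∧ b * y ∣ a * p * t := by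
    rw [dvd_l hx rfl, dvd_l hy hpq.symm, mul_dvd_mul_iff_left_of_cancel, isLcm_pair.1 hl]
  refine isLcm_pair.2 fun w => ⟨fun ⟨t, ht⟩ => ?_, fun ⟨hxw, hyw⟩ => ?_⟩
  · rw [ht, mul_assoc]
    exact (key _).1 (mul_dvd_mul_left _ (dvd_mul_right l t))
  · obtain ⟨t, rfl⟩ := (isLcm_pair.1 hab w).2
      ⟨dvd_of_mul_right_dvd hxw, dvd_of_mul_right_dvd hyw⟩
    exact (key t).2 ⟨hxw, hyw⟩

/-- The elements `x ^ i * y ^ j` with `i + j = k`. -/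
def mulPowSet (x y : M) (k : ℕ) : Set M :=
  (fun ij : ℕ × ℕ => x ^ ij.1 * y ^ ij.2) '' Finset.HasAntidiagonal.antidiagonal k

theorem mul_pow_mem_mulPowSet (x y : M) {i j k : ℕ} (h : i + j = k) :
    x ^ i * y ^ j ∈ mulPowSet x y k :=
  ⟨(i, j), by simpa using h, rfl⟩

theorem mulPowSet_comm {x y : M} (hxy : Commute x y) (k : ℕ) :
    mulPowSet y x k = mulPowSet x y k := by
  have subset {x y : M} (hxy : Commute x y) : mulPowSet y x k ⊆ mulPowSet x y k := by
    rintro _ ⟨⟨i, j⟩, hij, rfl⟩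
    exact ⟨(j, i), by simpa [add_comm] using hij, hxy.pow_pow j i⟩
  exact (subset hxy).antisymm (subset hxy.symm)

theorem IsLcm.mul_dvd_mul_of_pow_eq_pow [IsLeftCancelMul M] {x y l : M} {k : ℕ}
    (hl : IsLcm (mulPowSet x y k) l) (hxy : Commute x y) (hk : k ≠ 0) (h : x ^ k = y ^ k) :
    x * l ∣ y * l := by
  obtain ⟨k, rfl⟩ := Nat.exists_eq_succ_of_ne_zero hk
  refine hl.mul_dvd ⟨_, mul_pow_mem_mulPowSet x y (add_zero _)⟩ ?_
  rintro _ ⟨⟨i, j⟩, hij, rfl⟩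
  rw [Finset.mem_coe, Finset.HasAntidiagonal.mem_antidiagonal] at hij
  cases j with
  | zero =>
    have e : x * (x ^ i * y ^ 0) = y * (x ^ 1 * y ^ k) := by
      obtain rfl : i = k + 1 := hij
      rw [h, pow_zero, mul_one, pow_one, ← mul_assoc, ← hxy.eq, mul_assoc, ← pow_succ']
    exact e ▸ mul_dvd_mul_left y (hl.dvd (mul_pow_mem_mulPowSet x y (add_comm 1 k)))
  | succ j =>
    have e : x * (x ^ i * y ^ (j + 1)) = y * (x ^ (i + 1) * y ^ j) := by
      rw [← mul_assoc y, ← (hxy.pow_left _).eq, pow_succ' x, pow_succ' y]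
      simp only [mul_assoc]
    exact e ▸ mul_dvd_mul_left y (hl.dvd (mul_pow_mem_mulPowSet x y (by lia)))

/-- Multiplying the `x ^ i * y ^ j` with `i + j = k` by `x` or by `y` gives the same elements, so
their least common multiple `l` satisfies `x * l = y * l`. -/
theorem eq_of_commute_of_pow_eq_pow [IsCancelMul M] [Subsingleton Mˣ]
    (hM : ∀ x y : M, ∃ l, IsLcm {x, y} l) {x y : M} {k : ℕ} (hk : k ≠ 0) (hxy : Commute x y)
    (h : x ^ k = y ^ k) : x = y := by
  obtain ⟨l, hl⟩ := exists_isLcm_of_finite hM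
    ((Finset.finite_toSet _).image _ : (mulPowSet x y k).Finite)
  have hl' : IsLcm (mulPowSet y x k) l := mulPowSet_comm hxy k ▸ hl
  exact mul_right_cancel <| dvd_antisymm_of_subsingleton_units
    (hl.mul_dvd_mul_of_pow_eq_pow hxy hk h) (hl'.mul_dvd_mul_of_pow_eq_pow hxy.symm hk h.symm)

end Lcm

/-! ### The Artin monoid of a triangle-free graph -/

/-- A family in a monoid satisfying the Artin relations of the simply laced Coxeter graph `G`. -/
structure IsArtinFamily {I M : Type*} [Monoid M] (G : SimpleGraph I) (f : I → M) : Prop where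
  comm {i j : I} : ¬ G.Adj i j → Commute (f i) (f j)
  braid {i j : I} : G.Adj i j → f i * f j * f i = f j * f i * f j

/-- The defining relations of the Artin monoid of a simply laced Coxeter graph. -/
inductive ArtinMonoidRel {I : Type*} (G : SimpleGraph I) : FreeMonoid I → FreeMonoid I → Prop
  | comm (i j : I) (h : ¬ G.Adj i j) :
      ArtinMonoidRel G (FreeMonoid.of i * FreeMonoid.of j) (FreeMonoid.of j * FreeMonoid.of i)
  | braid (i j : I) (h : G.Adj i j) :
      ArtinMonoidRel G (FreeMonoid.of i * FreeMonoid.of j * FreeMonoid.of i)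
        (FreeMonoid.of j * FreeMonoid.of i * FreeMonoid.of j)

/-- The Artin monoid of a simply laced Coxeter graph. -/
abbrev ArtinMonoid {I : Type*} (G : SimpleGraph I) := PresentedMonoid (ArtinMonoidRel G)

namespace ArtinMonoid

variable {I : Type*} {G : SimpleGraph I} {a b c : I}

/-- The standard generators of the Artin monoid. -/
def gen (G : SimpleGraph I) (i : I) : ArtinMonoid G := PresentedMonoid.of _ i

theorem isArtinFamily_gen (G : SimpleGraph I) : IsArtinFamily G (gen G) where
  comm {i j} h := PresentedMonoid.mk_eq_mk_of_rel (.comm i j h)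
  braid {i j} h := PresentedMonoid.mk_eq_mk_of_rel (.braid i j h)

theorem gen_comm_assoc (h : ¬ G.Adj a b) (Z : ArtinMonoid G) :
    gen G a * (gen G b * Z) = gen G b * (gen G a * Z) :=
  ((isArtinFamily_gen G).comm h).left_comm Z

theorem gen_braid_assoc (h : G.Adj a b) (Z : ArtinMonoid G) :
    gen G a * (gen G b * (gen G a * Z)) = gen G b * (gen G a * (gen G b * Z)) := by
  simpa only [mul_assoc] using congrArg (· * Z) ((isArtinFamily_gen G).braid h)

/-- The homomorphism out of the Artin monoid given by an Artin family. -/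
def lift {M : Type*} [Monoid M] {f : I → M} (h : IsArtinFamily G f) : ArtinMonoid G →* M :=
  PresentedMonoid.lift f <| by
    rintro _ _ (⟨i, j, hij⟩ | ⟨i, j, hij⟩)
    · simpa using (h.comm hij).eq
    · simpa using h.braid hij

@[simp]
theorem lift_gen {M : Type*} [Monoid M] {f : I → M} (h : IsArtinFamily G f) (i : I) :
    lift h (gen G i) = f i := rfl

theorem hom_ext {M : Type*} [Monoid M] {f g : ArtinMonoid G →* M}
    (h : ∀ i, f (gen G i) = g (gen G i)) : f = g :=
  PresentedMonoid.ext _ h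

theorem eq_one_or_eq_gen_mul (x : ArtinMonoid G) : x = 1 ∨ ∃ a y, x = gen G a * y := by
  induction x using PresentedMonoid.inductionOn with | _ w
  induction w using FreeMonoid.casesOn with
  | one => exact .inl rfl
  | of_mul a w => exact .inr ⟨a, PresentedMonoid.mk _ w, rfl⟩

/-- The word length, as a homomorphism. -/
def lengthHom (G : SimpleGraph I) : ArtinMonoid G →* Multiplicative ℕ :=
  lift (f := fun _ => Multiplicative.ofAdd 1) ⟨fun _ => .all _ _, fun _ => rfl⟩

/-- The word length of an element of the Artin monoid. -/
def length (x : ArtinMonoid G) : ℕ := (lengthHom G x).toAdd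

@[simp]
theorem length_one : length (1 : ArtinMonoid G) = 0 := by simp [length]

@[simp]
theorem length_mul (x y : ArtinMonoid G) : length (x * y) = length x + length y := by
  simp [length]

@[simp]
theorem length_gen (i : I) : length (gen G i) = 1 := rfl

theorem length_mk_of_mul (i : I) (w : FreeMonoid I) :
    length (PresentedMonoid.mk (ArtinMonoidRel G) (.of i * w)) =
      length (PresentedMonoid.mk (ArtinMonoidRel G) w) + 1 := by
  rw [map_mul, length_mul, add_comm]
  rfl

theorem eq_one_of_length_eq_zero {x : ArtinMonoid G} (h : length x = 0) : x = 1 := by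
  rcases eq_one_or_eq_gen_mul x with rfl | ⟨a, y, rfl⟩
  · rfl
  · simp at h

instance : Subsingleton (ArtinMonoid G)ˣ where
  allEq := by
    have eq_one (u : (ArtinMonoid G)ˣ) : u = 1 := Units.ext <| eq_one_of_length_eq_zero <| by
      have := length_mul (u : ArtinMonoid G) ↑u⁻¹
      rw [Units.mul_inv, length_one] at this
      lia
    exact fun u v => (eq_one u).trans (eq_one v).symm

open Classical in
/-- The element completing the generator `a` to the least common right multiple of the generators
`a` and `b`. -/
noncomputable def lcmCofactor (G : SimpleGraph I) (a b : I) : ArtinMonoid G :=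
  if a = b then 1 else if G.Adj a b then gen G b * gen G a else gen G b

theorem lcmCofactor_self (a : I) : lcmCofactor G a a = 1 := if_pos rfl

theorem lcmCofactor_of_adj (h : G.Adj a b) : lcmCofactor G a b = gen G b * gen G a := by
  rw [lcmCofactor, if_neg h.ne, if_pos h]

theorem lcmCofactor_of_not_adj (hne : a ≠ b) (h : ¬ G.Adj a b) : lcmCofactor G a b = gen G b := by
  rw [lcmCofactor, if_neg hne, if_neg h]

theorem gen_mul_lcmCofactor (a b : I) :
    gen G a * lcmCofactor G a b = gen G b * lcmCofactor G b a := by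
  by_cases hab : a = b
  · rw [hab]
  by_cases h : G.Adj a b
  · rw [lcmCofactor_of_adj h, lcmCofactor_of_adj h.symm, ← mul_assoc, ← mul_assoc,
      (isArtinFamily_gen G).braid h]
  · rw [lcmCofactor_of_not_adj hab h, lcmCofactor_of_not_adj (Ne.symm hab) (mt .symm h),
      (isArtinFamily_gen G).comm h]

theorem commute_gen_lcmCofactor (hca : ¬ G.Adj c a) (hcb : ¬ G.Adj c b) :
    Commute (gen G c) (lcmCofactor G a b) := by
  have ha := (isArtinFamily_gen G).comm hca
  have hb := (isArtinFamily_gen G).comm hcb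
  unfold lcmCofactor
  split_ifs
  exacts [.one_right _, hb.mul_right ha, hb]

/-- The equality `gen G a * X = gen G b * Y` is a right multiple of the equality of the two
expressions of the least common multiple of the generators `a` and `b`. -/
def FactorsThroughLcm (a b : I) (X Y : ArtinMonoid G) : Prop :=
  ∃ Z, X = lcmCofactor G a b * Z ∧ Y = lcmCofactor G b a * Z

/-- Garside's lemma for generators, restricted to elements of length less than `N`. -/
def GarsideLemmaBelow (G : SimpleGraph I) (N : ℕ) : Prop :=
  ∀ ⦃i j : I⦄ ⦃X Y : ArtinMonoid G⦄, length X < N → gen G i * X = gen G j * Y →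
    FactorsThroughLcm i j X Y

namespace FactorsThroughLcm

variable {X Y V : ArtinMonoid G}

theorem refl (a : I) (X : ArtinMonoid G) : FactorsThroughLcm a a X X :=
  ⟨X, by simp [lcmCofactor_self]⟩

theorem symm (h : FactorsThroughLcm a b X Y) : FactorsThroughLcm b a Y X :=
  let ⟨Z, hX, hY⟩ := h
  ⟨Z, hY, hX⟩

theorem mul_right (h : FactorsThroughLcm a b X Y) (T : ArtinMonoid G) :
    FactorsThroughLcm a b (X * T) (Y * T) :=
  let ⟨Z, hX, hY⟩ := h
  ⟨Z * T, by rw [hX, mul_assoc], by rw [hY, mul_assoc]⟩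

theorem eq (h : FactorsThroughLcm a a X Y) : X = Y := by
  obtain ⟨Z, rfl, rfl⟩ := h
  rfl

theorem iff_of_not_adj (hne : a ≠ b) (h : ¬ G.Adj a b) :
    FactorsThroughLcm a b X Y ↔ ∃ Z, X = gen G b * Z ∧ Y = gen G a * Z := by
  rw [FactorsThroughLcm, lcmCofactor_of_not_adj hne h,
    lcmCofactor_of_not_adj hne.symm (mt .symm h)]

theorem iff_of_adj (h : G.Adj a b) : FactorsThroughLcm a b X Y ↔
    ∃ Z, X = gen G b * (gen G a * Z) ∧ Y = gen G a * (gen G b * Z) := by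
  simp only [FactorsThroughLcm, lcmCofactor_of_adj h, lcmCofactor_of_adj h.symm, mul_assoc]

theorem trans_of_not_adj_of_not_adj (ih : GarsideLemmaBelow G (length V)) (hac : a ≠ c)
    (hcb : c ≠ b) (nac : ¬ G.Adj a c) (ncb : ¬ G.Adj c b) (h₁ : FactorsThroughLcm a c X V)
    (h₂ : FactorsThroughLcm c b V Y) : FactorsThroughLcm a b X Y := by
  obtain ⟨Z₁, rfl, rfl⟩ := (iff_of_not_adj hac nac).1 h₁
  obtain ⟨Z₂, hV, rfl⟩ := (iff_of_not_adj hcb ncb).1 h₂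
  obtain ⟨T, rfl, rfl⟩ := ih (by grind [length_mul, length_gen]) hV
  have nca := mt .symm nac
  exact ⟨gen G c * T, (commute_gen_lcmCofactor nca ncb).left_comm T,
    (commute_gen_lcmCofactor ncb nca).left_comm T⟩

theorem trans_of_adj_of_adj_left (ih : GarsideLemmaBelow G (length V)) (hcb : c ≠ b)
    (ac : G.Adj a c) (ncb : ¬ G.Adj c b) (ab : G.Adj a b) (h₁ : FactorsThroughLcm a c X V)
    (h₂ : FactorsThroughLcm c b V Y) : FactorsThroughLcm a b X Y := by
  obtain ⟨Z₁, rfl, rfl⟩ := (iff_of_adj ac).1 h₁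
  obtain ⟨Z₂, hV, rfl⟩ := (iff_of_not_adj hcb ncb).1 h₂
  obtain ⟨T, hT, rfl⟩ := (iff_of_adj ab).1 (ih (by grind [length_mul, length_gen]) hV)
  obtain ⟨S, rfl, hS⟩ := (iff_of_not_adj hcb ncb).1 (ih (by grind [length_mul, length_gen]) hT)
  have hl := congrArg length hT
  obtain ⟨U, rfl, rfl⟩ := (iff_of_adj ac).1 (ih (by grind [length_mul, length_gen]) hS)
  refine (iff_of_adj ab).2 ⟨gen G c * (gen G a * (gen G b * U)), ?_, ?_⟩
  · rw [gen_braid_assoc ab, gen_comm_assoc ncb, ← gen_comm_assoc ncb U, ← gen_braid_assoc ac]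
  · rw [← gen_comm_assoc ncb, ← gen_braid_assoc ac, gen_braid_assoc ab, gen_comm_assoc ncb]

theorem trans_of_adj_of_not_adj (ih : GarsideLemmaBelow G (length V)) (hcb : c ≠ b) (hab : a ≠ b)
    (ac : G.Adj a c) (ncb : ¬ G.Adj c b) (nab : ¬ G.Adj a b) (h₁ : FactorsThroughLcm a c X V)
    (h₂ : FactorsThroughLcm c b V Y) : FactorsThroughLcm a b X Y := by
  obtain ⟨Z₁, rfl, rfl⟩ := (iff_of_adj ac).1 h₁
  obtain ⟨Z₂, hV, rfl⟩ := (iff_of_not_adj hcb ncb).1 h₂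
  obtain ⟨T, hT, rfl⟩ := (iff_of_not_adj hab nab).1 (ih (by grind [length_mul, length_gen]) hV)
  obtain ⟨S, rfl, rfl⟩ := (iff_of_not_adj hcb ncb).1 (ih (by grind [length_mul, length_gen]) hT)
  refine (iff_of_not_adj hab nab).2 ⟨gen G c * (gen G a * S), ?_, ?_⟩
  · rw [gen_comm_assoc nab, gen_comm_assoc ncb]
  · rw [gen_braid_assoc ac]

theorem trans_of_adj_of_adj (ih : GarsideLemmaBelow G (length V)) (hab : a ≠ b)
    (ac : G.Adj a c) (cb : G.Adj c b) (nab : ¬ G.Adj a b) (h₁ : FactorsThroughLcm a c X V)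
    (h₂ : FactorsThroughLcm c b V Y) : FactorsThroughLcm a b X Y := by
  obtain ⟨Z₁, rfl, rfl⟩ := (iff_of_adj ac).1 h₁
  obtain ⟨Z₂, hV, rfl⟩ := (iff_of_adj cb).1 h₂
  obtain ⟨T, hT₁, hT₂⟩ := (iff_of_not_adj hab nab).1 (ih (by grind [length_mul, length_gen]) hV)
  have hl₁ := congrArg length hT₁
  have hl₂ := congrArg length hT₂
  obtain ⟨S, rfl, rfl⟩ := (iff_of_adj cb).1 (ih (by grind [length_mul, length_gen]) hT₁)
  obtain ⟨S', rfl, hS⟩ := (iff_of_adj ac.symm).1 (ih (by grind [length_mul, length_gen]) hT₂)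
  have hS' := (ih (by grind [length_mul, length_gen]) hS).eq
  obtain ⟨U, rfl, rfl⟩ := (iff_of_not_adj hab.symm (mt .symm nab)).1
    (ih (by grind [length_mul, length_gen]) hS')
  refine (iff_of_not_adj hab nab).2 ⟨gen G c * (gen G b * (gen G a * (gen G c * U))), ?_, ?_⟩
  · rw [gen_comm_assoc nab, gen_braid_assoc ac, gen_braid_assoc cb]
  · rw [← gen_comm_assoc nab, gen_braid_assoc cb.symm, ← gen_braid_assoc ac, gen_comm_assoc nab]

theorem trans_self_of_adj (ih : GarsideLemmaBelow G (length V)) (ac : G.Adj a c)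
    (h₁ : FactorsThroughLcm a c X V) (h₂ : FactorsThroughLcm c a V Y) :
    FactorsThroughLcm a a X Y := by
  obtain ⟨Z₁, rfl, rfl⟩ := (iff_of_adj ac).1 h₁
  obtain ⟨Z₂, hV, rfl⟩ := (iff_of_adj ac.symm).1 h₂
  rw [(ih (by grind [length_mul, length_gen]) (ih (by grind [length_mul, length_gen]) hV).eq).eq]
  exact refl _ _

theorem trans_of_adj_left (ih : GarsideLemmaBelow G (length V)) (hcb : c ≠ b) (ac : G.Adj a c)
    (ncb : ¬ G.Adj c b) (h₁ : FactorsThroughLcm a c X V) (h₂ : FactorsThroughLcm c b V Y) :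
    FactorsThroughLcm a b X Y := by
  by_cases ab : G.Adj a b
  · exact trans_of_adj_of_adj_left ih hcb ac ncb ab h₁ h₂
  · exact trans_of_adj_of_not_adj ih hcb (fun h => ncb (h ▸ ac.symm)) ac ncb ab h₁ h₂

theorem trans (hG : G.CliqueFree 3) (ih : GarsideLemmaBelow G (length V))
    (h₁ : FactorsThroughLcm a c X V) (h₂ : FactorsThroughLcm c b V Y) :
    FactorsThroughLcm a b X Y := by
  rcases eq_or_ne a c with rfl | hac
  · rwa [h₁.eq]
  rcases eq_or_ne c b with rfl | hcb
  · rwa [← h₂.eq]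
  classical
  by_cases ac : G.Adj a c <;> by_cases cb : G.Adj c b
  · rcases eq_or_ne a b with rfl | hab
    · exact trans_self_of_adj ih ac h₁ h₂
    · have nab (ab : G.Adj a b) : False :=
        hG {a, c, b} (SimpleGraph.is3Clique_triple_iff.2 ⟨ac, ab, cb⟩)
      exact trans_of_adj_of_adj ih hab ac cb nab h₁ h₂
  · exact trans_of_adj_left ih hcb ac cb h₁ h₂
  · exact (trans_of_adj_left ih hac.symm cb.symm (mt .symm ac) h₂.symm h₁.symm).symm
  · exact trans_of_not_adj_of_not_adj ih hac hcb ac cb h₁ h₂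

end FactorsThroughLcm

/-- The relation induced on words by `FactorsThroughLcm` on first letters and remainders. -/
def WordsFactorThroughLcm (G : SimpleGraph I) (x y : FreeMonoid I) : Prop :=
  x = 1 ∧ y = 1 ∨ ∃ a b x' y', x = .of a * x' ∧ y = .of b * y' ∧
    FactorsThroughLcm a b (PresentedMonoid.mk (ArtinMonoidRel G) x') (PresentedMonoid.mk _ y')

namespace WordsFactorThroughLcm

variable {w x y z : FreeMonoid I} {N : ℕ}

theorem refl (x : FreeMonoid I) : WordsFactorThroughLcm G x x := by
  cases x using FreeMonoid.casesOn with
  | one => exact .inl ⟨rfl, rfl⟩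
  | of_mul a x => exact .inr ⟨a, a, x, x, rfl, rfl, .refl a _⟩

theorem symm (h : WordsFactorThroughLcm G x y) : WordsFactorThroughLcm G y x := by
  rcases h with ⟨hx, hy⟩ | ⟨a, b, x', y', hx, hy, h⟩
  · exact .inl ⟨hy, hx⟩
  · exact .inr ⟨b, a, y', x', hy, hx, h.symm⟩

theorem of_rel (h : ArtinMonoidRel G x y) : WordsFactorThroughLcm G x y := by
  rcases h with ⟨i, j, h⟩ | ⟨i, j, h⟩
  · rcases eq_or_ne i j with rfl | hij
    · exact refl _
    · exact .inr ⟨i, j, _, _, rfl, rfl, (FactorsThroughLcm.iff_of_not_adj hij h).2 ⟨1, rfl, rfl⟩⟩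
  · exact .inr ⟨i, j, _, _, rfl, rfl, (FactorsThroughLcm.iff_of_adj h).2 ⟨1, rfl, rfl⟩⟩

theorem iff_of_mul {a b : I} : WordsFactorThroughLcm G (.of a * x) (.of b * y) ↔
    FactorsThroughLcm a b (PresentedMonoid.mk (ArtinMonoidRel G) x) (PresentedMonoid.mk _ y) := by
  refine ⟨?_, fun h => .inr ⟨a, b, x, y, rfl, rfl, h⟩⟩
  rintro (⟨h, -⟩ | ⟨a', b', x', y', hx, hy, h⟩)
  · exact (List.cons_ne_nil _ _ h).elim
  · obtain ⟨rfl, rfl⟩ := List.cons_eq_cons.1 hx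
    obtain ⟨rfl, rfl⟩ := List.cons_eq_cons.1 hy
    exact h

theorem trans (hG : G.CliqueFree 3) (ih : GarsideLemmaBelow G N)
    (hN : length (PresentedMonoid.mk (ArtinMonoidRel G) y) ≤ N + 1)
    (h₁ : WordsFactorThroughLcm G x y) (h₂ : WordsFactorThroughLcm G y z) :
    WordsFactorThroughLcm G x z := by
  rcases h₁ with ⟨rfl, rfl⟩ | ⟨a, c, x', y', rfl, rfl, h₁⟩
  · exact h₂
  rcases h₂ with ⟨h, -⟩ | ⟨c', b, y'', z', hy, rfl, h₂⟩
  · exact (List.cons_ne_nil _ _ h).elim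
  obtain ⟨rfl, rfl⟩ := List.cons_eq_cons.1 hy
  rw [length_mk_of_mul, Nat.add_le_add_iff_right] at hN
  exact iff_of_mul.2 (h₁.trans hG (fun _ _ _ _ hX => ih (hX.trans_le hN)) h₂)

theorem mul (hyz : PresentedMonoid.mk (ArtinMonoidRel G) y = PresentedMonoid.mk _ z)
    (h₁ : WordsFactorThroughLcm G w x) (h₂ : WordsFactorThroughLcm G y z) :
    WordsFactorThroughLcm G (w * y) (x * z) := by
  rcases h₁ with ⟨rfl, rfl⟩ | ⟨a, b, w', x', rfl, rfl, h₁⟩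
  · simpa only [one_mul] using h₂
  · rw [mul_assoc, mul_assoc, iff_of_mul, map_mul, map_mul, ← hyz]
    exact h₁.mul_right _

theorem of_conGen (hG : G.CliqueFree 3) (ih : GarsideLemmaBelow G N)
    (h : ConGen.Rel (ArtinMonoidRel G) x y)
    (hN : length (PresentedMonoid.mk (ArtinMonoidRel G) x) ≤ N + 1) :
    WordsFactorThroughLcm G x y := by
  induction h with
  | of x y h => exact of_rel h
  | refl x => exact refl x
  | symm h h' => exact (h' (by rwa [PresentedMonoid.mk_eq_mk_iff.2 h])).symm
  | trans h₁ _ h₁' h₂' =>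
    have hy := hN
    rw [PresentedMonoid.mk_eq_mk_iff.2 h₁] at hy
    exact (h₁' hN).trans hG ih hy (h₂' hy)
  | mul _ h₂ h₁' h₂' =>
    rw [map_mul, length_mul] at hN
    exact (h₁' (by lia)).mul (PresentedMonoid.mk_eq_mk_iff.2 h₂) (h₂' (by lia))

end WordsFactorThroughLcm

theorem garsideLemmaBelow (hG : G.CliqueFree 3) (N : ℕ) : GarsideLemmaBelow G N := by
  induction N with
  | zero => exact fun _ _ _ _ hX => absurd hX (Nat.not_lt_zero _)
  | succ N ih =>
    intro a b X Y hX h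
    induction X using PresentedMonoid.inductionOn with | _ x
    induction Y using PresentedMonoid.inductionOn with | _ y
    refine WordsFactorThroughLcm.iff_of_mul.1
      (.of_conGen hG ih (PresentedMonoid.mk_eq_mk_iff.1 ?_) ?_)
    · exact h
    · rwa [length_mk_of_mul, Nat.add_le_add_iff_right, ← Nat.lt_succ_iff]

theorem factorsThroughLcm (hG : G.CliqueFree 3) {X Y : ArtinMonoid G}
    (h : gen G a * X = gen G b * Y) : FactorsThroughLcm a b X Y :=
  garsideLemmaBelow hG _ (Nat.lt_succ_self _) h

theorem isLeftCancelMul (hG : G.CliqueFree 3) : IsLeftCancelMul (ArtinMonoid G) where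
  mul_left_cancel x y z h := by
    induction hN : length x generalizing x with
    | zero => simpa [eq_one_of_length_eq_zero hN] using h
    | succ N ih =>
      rcases eq_one_or_eq_gen_mul x with rfl | ⟨a, x, rfl⟩
      · simpa using h
      · simp only [mul_assoc] at h
        exact ih x (factorsThroughLcm hG h).eq (by grind [length_mul, length_gen])

/-- Reversal of words, as a homomorphism to the opposite monoid. -/
def reverse (G : SimpleGraph I) : ArtinMonoid G →* (ArtinMonoid G)ᵐᵒᵖ :=
  lift (f := fun i => .op (gen G i))
    { comm h := ((isArtinFamily_gen G).comm h).op
      braid h := by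
        simp only [← MulOpposite.op_mul, ← mul_assoc, (isArtinFamily_gen G).braid h] }

theorem unop_reverse_unop_reverse (x : ArtinMonoid G) :
    (reverse G (reverse G x).unop).unop = x := by
  have : (reverse G).op.comp (reverse G) = (MulEquiv.opOp (ArtinMonoid G)).toMonoidHom :=
    hom_ext fun i => rfl
  exact congrArg (fun z => z.unop.unop) (DFunLike.congr_fun this x)

theorem isCancelMul (hG : G.CliqueFree 3) : IsCancelMul (ArtinMonoid G) where
  __ := isLeftCancelMul hG
  mul_right_cancel x y z h := by
    have := isLeftCancelMul hG
    have h' := congrArg (fun t => (reverse G t).unop) h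
    simp only [map_mul, MulOpposite.unop_mul, mul_right_inj] at h'
    rw [← unop_reverse_unop_reverse y, h', unop_reverse_unop_reverse]

theorem isLcm_gen_gen (hG : G.CliqueFree 3) (a b : I) :
    IsLcm {gen G a, gen G b} (gen G a * lcmCofactor G a b) := by
  refine isLcm_pair.2 fun w => ⟨fun hw => ⟨dvd_of_mul_right_dvd hw, ?_⟩, ?_⟩
  · rw [gen_mul_lcmCofactor] at hw
    exact dvd_of_mul_right_dvd hw
  · rintro ⟨⟨X, rfl⟩, Y, hY⟩
    obtain ⟨Z, rfl, -⟩ := factorsThroughLcm hG hY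
    exact mul_dvd_mul_left _ (dvd_mul_right _ Z)

theorem exists_isLcm_of_dvd (hG : G.CliqueFree 3) {x y z : ArtinMonoid G} (hx : x ∣ z)
    (hy : y ∣ z) : ∃ l, IsLcm {x, y} l := by
  have := isLeftCancelMul hG
  induction hN : length z using Nat.strong_induction_on generalizing x y z with
  | _ N ih =>
    rcases eq_one_or_eq_gen_mul x with rfl | ⟨a, x, rfl⟩
    · exact ⟨y, isLcm_pair.2 (by simp)⟩
    rcases eq_one_or_eq_gen_mul y with rfl | ⟨b, y, rfl⟩
    · exact ⟨gen G a * x, isLcm_pair.2 (by simp)⟩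
    obtain ⟨t, rfl⟩ := (isLcm_pair.1 (isLcm_gen_gen hG a b) z).2
      ⟨dvd_of_mul_right_dvd hx, dvd_of_mul_right_dvd hy⟩
    have hpq := gen_mul_lcmCofactor (G := G) a b
    have hxt : x ∣ lcmCofactor G a b * t := by
      rwa [mul_assoc, mul_dvd_mul_iff_left_of_cancel] at hx
    have hyt : y ∣ lcmCofactor G b a * t := by
      rwa [hpq, mul_assoc, mul_dvd_mul_iff_left_of_cancel] at hy
    have hN' := congrArg length hpq
    simp only [length_mul, length_gen] at hN hN'
    obtain ⟨l₁, h₁⟩ := ih _ (by lia) hxt (dvd_mul_right _ t) (length_mul _ _)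
    obtain ⟨l₂, h₂⟩ := ih _ (by lia) hyt (dvd_mul_right _ t) (length_mul _ _)
    obtain ⟨u, rfl⟩ := h₁.dvd (Set.mem_insert_of_mem _ rfl)
    obtain ⟨v, rfl⟩ := h₂.dvd (Set.mem_insert_of_mem _ rfl)
    have hut := (isLcm_pair.1 h₁ _).2 ⟨hxt, dvd_mul_right _ t⟩
    have hvt := (isLcm_pair.1 h₂ _).2 ⟨hyt, dvd_mul_right _ t⟩
    rw [mul_dvd_mul_iff_left_of_cancel] at hut hvt
    obtain ⟨l, hl⟩ := ih _ (by lia) hut hvt rfl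
    exact ⟨_, .paste hpq (isLcm_gen_gen hG a b) h₁ h₂ hl⟩

end ArtinMonoid

/-- An element of the Artin monoid with the two properties of the square of the Garside element
on which the embedding into the Artin group rests. -/
structure IsCentralCommonMultiple {I : Type*} {G : SimpleGraph I} (C : ArtinMonoid G) : Prop where
  commute (x : ArtinMonoid G) : Commute C x
  gen_dvd (i : I) : ArtinMonoid.gen G i ∣ C

namespace IsCentralCommonMultiple

variable {I : Type*} {G : SimpleGraph I} {C : ArtinMonoid G}

theorem exists_dvd_pow (hC : IsCentralCommonMultiple C) (x : ArtinMonoid G) : ∃ k, x ∣ C ^ k := by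
  induction hN : x.length generalizing x with
  | zero => exact ⟨0, by simp [ArtinMonoid.eq_one_of_length_eq_zero hN]⟩
  | succ N ih =>
    rcases ArtinMonoid.eq_one_or_eq_gen_mul x with rfl | ⟨a, x, rfl⟩
    · exact ⟨0, one_dvd _⟩
    · obtain ⟨k, hk⟩ := ih x (by grind [ArtinMonoid.length_mul, ArtinMonoid.length_gen])
      obtain ⟨p, hp⟩ := hC.gen_dvd a
      have hCk : C ^ (k + 1) = ArtinMonoid.gen G a * (C ^ k * p) := by
        rw [((hC.commute p).pow_left k).eq, ← mul_assoc, ← hp, pow_succ']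
      exact ⟨k + 1, hCk ▸ mul_dvd_mul_left _ (hk.mul_right p)⟩

theorem exists_isLcm (hC : IsCentralCommonMultiple C) (hG : G.CliqueFree 3)
    (x y : ArtinMonoid G) : ∃ l, IsLcm {x, y} l := by
  obtain ⟨a, ha⟩ := hC.exists_dvd_pow x
  obtain ⟨b, hb⟩ := hC.exists_dvd_pow y
  exact ArtinMonoid.exists_isLcm_of_dvd hG (ha.trans (pow_dvd_pow C (Nat.le_add_right a b)))
    (hb.trans (pow_dvd_pow C (Nat.le_add_left b a)))

end IsCentralCommonMultiple

/-! ### Artin groups -/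

theorem map_braidRelWord_eq_one_iff {I H : Type*} [Group H] (φ : FreeGroup I →* H) {i j : I} :
    φ (braidRelWord i j) = 1 ↔
      φ (.of i) * φ (.of j) * φ (.of i) = φ (.of j) * φ (.of i) * φ (.of j) := by
  rw [braidRelWord, map_mul, map_inv, mul_inv_eq_one]
  simp only [map_mul]

theorem map_commRelWord_eq_one_iff {I H : Type*} [Group H] (φ : FreeGroup I →* H) {i j : I} :
    φ (commRelWord i j) = 1 ↔ Commute (φ (.of i)) (φ (.of j)) := by
  rw [commRelWord, map_mul, map_inv, mul_inv_eq_one, map_mul, map_mul, commute_iff_eq]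

/-- The defining relations of the Artin group of a simply laced Coxeter graph. -/
def artinGroupRels {I : Type*} (G : SimpleGraph I) : Set (FreeGroup I) :=
  {r | (∃ i j, G.Adj i j ∧ r = braidRelWord i j) ∨ (∃ i j, ¬ G.Adj i j ∧ r = commRelWord i j)}

/-- The Artin group of a simply laced Coxeter graph. -/
abbrev ArtinGroup {I : Type*} (G : SimpleGraph I) := PresentedGroup (artinGroupRels G)

/-- The witness is the Ore localization at the powers of `C`. -/
theorem exists_injective_and_isUnit_of_central.{u} {M : Type u} [Monoid M] [IsCancelMul M] {C : M}
    (hC : ∀ x, Commute C x) :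
    ∃ (N : Type u) (_ : Monoid N) (φ : M →* N), Function.Injective φ ∧ IsUnit (φ C) := by
  let : OreLocalization.OreSet (Submonoid.powers C) :=
    { ore_right_cancel := fun r₁ r₂ s h => ⟨1, by rw [mul_right_cancel h]⟩
      oreNum := fun r _ => r
      oreDenom := fun _ s => s
      ore_eq := by
        rintro r ⟨_, k, rfl⟩
        exact ((hC r).pow_left k).eq }
  refine ⟨OreLocalization (Submonoid.powers C) M, inferInstance, OreLocalization.numeratorHom,
    fun x y hxy => ?_, OreLocalization.numerator_isUnit ⟨C, Submonoid.mem_powers C⟩⟩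
  obtain ⟨u, v, h₁, h₂⟩ := OreLocalization.oreDiv_eq_iff.1 hxy
  simp only [OneMemClass.coe_one, mul_one] at h₂
  rw [← h₂, smul_eq_mul, Submonoid.smul_def, smul_eq_mul] at h₁
  exact (mul_left_cancel h₁).symm

namespace ArtinGroup

variable {I : Type*} {G : SimpleGraph I}

/-- The standard generators of the Artin group. -/
def gen (G : SimpleGraph I) (i : I) : ArtinGroup G := PresentedGroup.of i

theorem isArtinFamily_gen (G : SimpleGraph I) : IsArtinFamily G (gen G) where
  comm {i j} h := (map_commRelWord_eq_one_iff (PresentedGroup.mk (artinGroupRels G))).1 <|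
    PresentedGroup.one_of_mem (Or.inr ⟨i, j, h, rfl⟩)
  braid {i j} h := (map_braidRelWord_eq_one_iff (PresentedGroup.mk (artinGroupRels G))).1 <|
    PresentedGroup.one_of_mem (Or.inl ⟨i, j, h, rfl⟩)

/-- The homomorphism out of the Artin group given by an Artin family. -/
def lift {H : Type*} [Group H] {f : I → H} (h : IsArtinFamily G f) : ArtinGroup G →* H :=
  PresentedGroup.toGroup (f := f) <| by
    rintro _ (⟨i, j, hij, rfl⟩ | ⟨i, j, hij, rfl⟩)
    · simpa only [map_braidRelWord_eq_one_iff, FreeGroup.lift_apply_of] using h.braid hij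
    · simpa only [map_commRelWord_eq_one_iff, FreeGroup.lift_apply_of] using h.comm hij

@[simp]
theorem lift_gen {H : Type*} [Group H] {f : I → H} (h : IsArtinFamily G f) (i : I) :
    lift h (gen G i) = f i := PresentedGroup.toGroup.of _

/-- The canonical homomorphism from the Artin monoid to the Artin group. -/
def ofMonoid (G : SimpleGraph I) : ArtinMonoid G →* ArtinGroup G :=
  ArtinMonoid.lift (isArtinFamily_gen G)

theorem ofMonoid_gen (i : I) : ofMonoid G (ArtinMonoid.gen G i) = gen G i := rfl

variable {C : ArtinMonoid G}

theorem ofMonoid_injective (hG : G.CliqueFree 3) (hC : IsCentralCommonMultiple C) :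
    Function.Injective (ofMonoid G) := by
  have := ArtinMonoid.isCancelMul hG
  obtain ⟨N, _, φ, hφ, hφC⟩ := exists_injective_and_isUnit_of_central hC.commute
  have isUnit_gen (i : I) : IsUnit (φ (ArtinMonoid.gen G i)) := by
    obtain ⟨p, hp⟩ := hC.gen_dvd i
    have hcomm : Commute (ArtinMonoid.gen G i) p := by
      refine mul_left_cancel (a := ArtinMonoid.gen G i) ?_
      rw [← hp, ← mul_assoc, ← hp, (hC.commute _).eq]
    rw [hp, map_mul, (hcomm.map φ).isUnit_mul_iff] at hφC
    exact hφC.1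
  have hf : IsArtinFamily G fun i => (isUnit_gen i).unit :=
    { comm h := Units.ext ((ArtinMonoid.isArtinFamily_gen G).comm h |>.map φ)
      braid h := Units.ext <| by
        simp only [Units.val_mul, IsUnit.unit_spec, ← map_mul,
          (ArtinMonoid.isArtinFamily_gen G).braid h] }
  have hcomp : ((Units.coeHom N).comp (lift hf)).comp (ofMonoid G) = φ :=
    ArtinMonoid.hom_ext fun i => by simp [ofMonoid_gen]
  refine Function.Injective.of_comp (f := (Units.coeHom N).comp (lift hf)) ?_
  rwa [← MonoidHom.coe_comp, hcomp]

theorem exists_mul_pow_eq_ofMonoid (hC : IsCentralCommonMultiple C) (g : ArtinGroup G) :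
    ∃ x j, g * ofMonoid G C ^ j = ofMonoid G x := by
  have hg : g ∈ Subgroup.closure (Set.range (gen G)) :=
    PresentedGroup.closure_range_of (artinGroupRels G) ▸ Subgroup.mem_top g
  induction hg using Subgroup.closure_induction_left with
  | one => exact ⟨1, 0, by simp⟩
  | mul_left _ hi g _ ih =>
    obtain ⟨i, rfl⟩ := hi
    obtain ⟨x, j, hx⟩ := ih
    exact ⟨ArtinMonoid.gen G i * x, j, by rw [mul_assoc, hx, map_mul, ofMonoid_gen]⟩
  | inv_mul_cancel _ hi g _ ih =>
    obtain ⟨i, rfl⟩ := hi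
    obtain ⟨x, j, hx⟩ := ih
    obtain ⟨p, hp⟩ := hC.gen_dvd i
    refine ⟨p * x, j + 1, ?_⟩
    rw [pow_succ, mul_assoc, ← mul_assoc g, hx, inv_mul_eq_iff_eq_mul, ← map_mul,
      ← (hC.commute x).eq, hp, mul_assoc, map_mul, ofMonoid_gen]

theorem eq_one_of_pow_eq_one (hG : G.CliqueFree 3) (hC : IsCentralCommonMultiple C)
    {g : ArtinGroup G} {k : ℕ} (hk : k ≠ 0) (h : g ^ k = 1) : g = 1 := by
  have := ArtinMonoid.isCancelMul hG
  obtain ⟨x, j, hx⟩ := exists_mul_pow_eq_ofMonoid hC g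
  have hCx : Commute (C ^ j) x := (hC.commute x).pow_left j
  have hCg : Commute (ofMonoid G C ^ j) g := by
    have := hCx.map (ofMonoid G)
    rw [← hx, map_pow] at this
    simpa using this.mul_right (Commute.refl (ofMonoid G C ^ j)).inv_right
  have hpow : (C ^ j) ^ k = x ^ k := by
    apply ofMonoid_injective hG hC
    rw [map_pow _ x, ← hx, hCg.symm.mul_pow, h, one_mul, map_pow, map_pow]
  rw [← eq_of_commute_of_pow_eq_pow (hC.exists_isLcm hG) hk hCx hpow, map_pow] at hx
  exact mul_eq_right.1 hx

end ArtinGroup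

/-! ### Braid groups -/

/-- The sequence `s 0, …, s (m - 1)` satisfies the braid relations. -/
structure IsBraidSequence {M : Type*} [Monoid M] (m : ℕ) (s : ℕ → M) : Prop where
  braid : ∀ i, i + 1 < m → s i * s (i + 1) * s i = s (i + 1) * s i * s (i + 1)
  comm : ∀ i j, i + 2 ≤ j → j < m → Commute (s i) (s j)

theorem isBraidSequence_iff_isArtinFamily {M : Type*} [Monoid M] {m : ℕ} {s : ℕ → M} :
    IsBraidSequence m s ↔ IsArtinFamily (SimpleGraph.pathGraph m) fun i : Fin m => s i where
  mp h :=
    { comm {i j} hij := by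
        rw [SimpleGraph.pathGraph_adj] at hij
        rcases lt_trichotomy i.val j.val with hlt | heq | hlt
        · exact h.comm i j (by omega) j.2
        · rw [heq]
        · exact (h.comm j i (by omega) i.2).symm
      braid {i j} hij := by
        rcases SimpleGraph.pathGraph_adj.1 hij with hij | hij
        · simpa only [hij] using h.braid i (by omega)
        · simpa only [hij] using (h.braid j (by omega)).symm }
  mpr h :=
    { braid i hi := h.braid (i := ⟨i, by omega⟩) (j := ⟨i + 1, hi⟩)
        (SimpleGraph.pathGraph_adj.2 (.inl rfl))
      comm i j hij hj := h.comm (i := ⟨i, by omega⟩) (j := ⟨j, hj⟩) <| by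
        rw [SimpleGraph.pathGraph_adj]
        simp only
        omega }

theorem IsArtinFamily.isBraidSequence {M : Type*} [Monoid M] {m : ℕ} [NeZero m] {f : Fin m → M}
    (h : IsArtinFamily (SimpleGraph.pathGraph m) f) :
    IsBraidSequence m fun i => f (Fin.ofNat m i) :=
  isBraidSequence_iff_isArtinFamily.2 <| by simpa only [Fin.ofNat_val_eq_self] using h

/-- The product `s 0 * s 1 * ⋯ * s (k - 1)`. -/
def seqProd {M : Type*} [Monoid M] (s : ℕ → M) : ℕ → M
  | 0 => 1
  | k + 1 => seqProd s k * s k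

section SeqProd

variable {M : Type*} [Monoid M] {s : ℕ → M} {k : ℕ}

theorem seqProd_succ' (s : ℕ → M) (k : ℕ) :
    seqProd s (k + 1) = s 0 * seqProd (fun i => s (i + 1)) k := by
  induction k with
  | zero => simp [seqProd]
  | succ k ih => rw [seqProd, ih, seqProd, mul_assoc]

theorem map_seqProd {N : Type*} [Monoid N] (φ : M →* N) {t : ℕ → N} (h : ∀ i < k, φ (s i) = t i) :
    φ (seqProd s k) = seqProd t k := by
  induction k with
  | zero => simp [seqProd]
  | succ k ih => rw [seqProd, map_mul, ih fun i hi => h i (by omega), h k (by omega), seqProd]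

theorem semiconjBy_seqProd {x : M} {t : ℕ → M} (h : ∀ i < k, SemiconjBy x (s i) (t i)) :
    SemiconjBy x (seqProd s k) (seqProd t k) := by
  induction k with
  | zero => exact SemiconjBy.one_right x
  | succ k ih => exact (ih fun i hi => h i (by omega)).mul_right (h k (by omega))

namespace IsBraidSequence

variable {m : ℕ}

theorem seqProd_semiconjBy (h : IsBraidSequence m s) {i : ℕ} (hi : i + 1 < k) (hk : k ≤ m) :
    SemiconjBy (seqProd s k) (s i) (s (i + 1)) := by
  induction k with
  | zero => omega
  | succ k ih =>
    rcases Nat.lt_or_ge (i + 1) k with hik | hik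
    · exact (ih hik (by omega)).mul_left (h.comm i k (by omega) (by omega)).symm
    · obtain rfl : k = i + 1 := by omega
      have hcomm : Commute (s (i + 1)) (seqProd s i) :=
        semiconjBy_seqProd fun j hj => (h.comm j (i + 1) (by omega) (by omega)).symm
      have hbraid : SemiconjBy (s i * s (i + 1)) (s i) (s (i + 1)) := by
        rw [SemiconjBy, h.braid i (by omega), mul_assoc]
      rw [seqProd, seqProd, mul_assoc]
      exact SemiconjBy.mul_left hcomm.symm hbraid

theorem seqProd_sq_semiconjBy (h : IsBraidSequence (k + 1) s) :
    SemiconjBy (seqProd s (k + 1) ^ 2) (s k) (s 0) := by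
  have hshift : SemiconjBy (seqProd s (k + 1)) (seqProd s k) (seqProd (fun i => s (i + 1)) k) :=
    semiconjBy_seqProd fun i hi => h.seqProd_semiconjBy (by omega) le_rfl
  have hsq : seqProd s (k + 1) ^ 2 = s 0 * (seqProd s (k + 1) * seqProd s k) := by
    rw [hshift.eq, ← mul_assoc, ← seqProd_succ', pow_two]
  rw [SemiconjBy]
  nth_rewrite 1 [hsq]
  rw [mul_assoc, mul_assoc, ← seqProd.eq_2, pow_two]

theorem seqProd_pow_semiconjBy (h : IsBraidSequence (k + 1) s) {i j : ℕ} (hij : i + j < k + 1) :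
    SemiconjBy (seqProd s (k + 1) ^ j) (s i) (s (i + j)) := by
  induction j with
  | zero => simp
  | succ j ih =>
    rw [pow_succ']
    exact (h.seqProd_semiconjBy (by omega) le_rfl).mul_left (ih (by omega))

theorem commute_seqProd_pow (h : IsBraidSequence (k + 1) s) {i : ℕ} (hi : i < k + 1) :
    Commute (seqProd s (k + 1) ^ (k + 2)) (s i) := by
  obtain ⟨j, rfl⟩ : ∃ j, k = i + j := ⟨k - i, by omega⟩
  have hfirst := h.seqProd_pow_semiconjBy (i := 0) (j := i) (by omega)
  have hlast := h.seqProd_pow_semiconjBy (i := i) (j := j) (by omega)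
  rw [zero_add] at hfirst
  rw [show i + j + 2 = i + 2 + j by omega, pow_add, pow_add]
  exact (hfirst.mul_left h.seqProd_sq_semiconjBy).mul_left hlast

theorem dvd_seqProd_pow (h : IsBraidSequence (k + 1) s) {i : ℕ} (hi : i < k + 1) :
    s i ∣ seqProd s (k + 1) ^ (k + 2) := by
  have hfirst := h.seqProd_pow_semiconjBy (i := 0) (j := i) (by omega)
  obtain ⟨j, hj⟩ : ∃ j, k + 2 = i + 1 + j := ⟨k + 1 - i, by omega⟩
  rw [zero_add] at hfirst
  rw [hj, pow_add, pow_succ]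
  nth_rewrite 2 [seqProd_succ']
  rw [← mul_assoc, hfirst.eq, mul_assoc, mul_assoc]
  exact Dvd.intro _ rfl

end IsBraidSequence

end SeqProd

/-- The braid group on `m + 1` strands. -/
abbrev BraidGroup (m : ℕ) := ArtinGroup (SimpleGraph.pathGraph m)

theorem pathGraph_cliqueFree_three (m : ℕ) : (SimpleGraph.pathGraph m).CliqueFree 3 :=
  (SimpleGraph.pathGraph.bicoloring m).colorable.cliqueFree (by simp)

theorem exists_isCentralCommonMultiple_pathGraph (m : ℕ) :
    ∃ C : ArtinMonoid (SimpleGraph.pathGraph (m + 1)), IsCentralCommonMultiple C := by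
  have hs := (ArtinMonoid.isArtinFamily_gen (SimpleGraph.pathGraph (m + 1))).isBraidSequence
  set s : ℕ → ArtinMonoid (SimpleGraph.pathGraph (m + 1)) :=
    fun i => ArtinMonoid.gen _ (Fin.ofNat (m + 1) i) with s_def
  have s_val (i : Fin (m + 1)) : s i = ArtinMonoid.gen _ i := by
    rw [s_def]
    simp only [Fin.ofNat_val_eq_self]
  refine ⟨seqProd s (m + 1) ^ (m + 2), ⟨fun x => ?_, fun i => ?_⟩⟩
  · induction hN : x.length generalizing x with
    | zero => rw [ArtinMonoid.eq_one_of_length_eq_zero hN]; exact Commute.one_right _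
    | succ N ih =>
      rcases ArtinMonoid.eq_one_or_eq_gen_mul x with rfl | ⟨i, x, rfl⟩
      · exact Commute.one_right _
      · rw [← s_val]
        exact (hs.commute_seqProd_pow i.2).mul_right
          (ih x (by grind [ArtinMonoid.length_mul, ArtinMonoid.length_gen]))
  · rw [← s_val]
    exact hs.dvd_seqProd_pow i.2

theorem IsBraidSequence.tail {M : Type*} [Monoid M] {m : ℕ} {s : ℕ → M}
    (h : IsBraidSequence (m + 1) s) : IsBraidSequence m fun i => s (i + 1) where
  braid i hi := h.braid (i + 1) (by omega)
  comm i j hij hj := h.comm (i + 1) (j + 1) (by omega) (by omega)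

namespace BraidGroup

theorem eq_one_of_pow_eq_one {m : ℕ} {g : BraidGroup (m + 1)} {k : ℕ} (hk : k ≠ 0)
    (h : g ^ k = 1) : g = 1 := by
  obtain ⟨C, hC⟩ := exists_isCentralCommonMultiple_pathGraph m
  exact ArtinGroup.eq_one_of_pow_eq_one (pathGraph_cliqueFree_three _) hC hk h

/-- The standard generators of the braid group, indexed by the natural numbers modulo `m`. -/
def gen (m : ℕ) [NeZero m] (i : ℕ) : BraidGroup m := ArtinGroup.gen _ (Fin.ofNat m i)

theorem isBraidSequence_gen (m : ℕ) [NeZero m] : IsBraidSequence m (gen m) :=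
  (ArtinGroup.isArtinFamily_gen _).isBraidSequence

/-- The homomorphism from the braid group determined by a braid sequence. -/
def lift {H : Type*} [Group H] {m : ℕ} {s : ℕ → H} (h : IsBraidSequence m s) :
    BraidGroup m →* H :=
  ArtinGroup.lift (isBraidSequence_iff_isArtinFamily.1 h)

theorem lift_gen {H : Type*} [Group H] {m : ℕ} [NeZero m] {s : ℕ → H} (h : IsBraidSequence m s)
    {i : ℕ} (hi : i < m) : lift h (gen m i) = s i := by
  simp [gen, lift, Nat.mod_eq_of_lt hi]

end BraidGroup

/-! ### Cyclic braid families -/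

/-- The relations of the affine braid group, for a family indexed by the vertices of an
`n`-cycle. -/
structure IsCyclicBraidFamily {M : Type*} [Monoid M] {n : ℕ} (f : ZMod n → M) : Prop where
  braid : ∀ i, f i * f (i + 1) * f i = f (i + 1) * f i * f (i + 1)
  comm : ∀ i j, i - j ≠ 1 → i - j ≠ -1 → Commute (f i) (f j)

namespace IsCyclicBraidFamily

variable {M : Type*} [Monoid M]

theorem map {N : Type*} [Monoid N] {n : ℕ} {f : ZMod n → M} (h : IsCyclicBraidFamily f)
    (φ : M →* N) : IsCyclicBraidFamily fun i => φ (f i) where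
  braid i := by simp only [← map_mul, h.braid i]
  comm i j hpred hsucc := (h.comm i j hpred hsucc).map φ

theorem shift {n : ℕ} {f : ZMod n → M} (h : IsCyclicBraidFamily f) (c : ZMod n) :
    IsCyclicBraidFamily fun i => f (i + c) where
  braid i := by
    rw [add_right_comm]
    exact h.braid (i + c)
  comm i j hpred hsucc := h.comm _ _ (by simpa using hpred) (by simpa using hsucc)

theorem isBraidSequence {k : ℕ} {f : ZMod (k + 2) → M} (h : IsCyclicBraidFamily f) :
    IsBraidSequence (k + 1) fun i => f i where
  braid i _ := by
    rw [Nat.cast_succ]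
    exact h.braid i
  comm i j hij hj := by
    refine h.comm _ _ (fun h => ?_) fun h => ?_
    · rw [sub_eq_iff_eq_add', ← Nat.cast_succ, ZMod.natCast_eq_natCast_iff',
        Nat.mod_eq_of_lt (by omega), Nat.mod_eq_of_lt (by omega)] at h
      omega
    · rw [sub_eq_iff_eq_add, neg_add_eq_sub, eq_sub_iff_add_eq, ← Nat.cast_succ,
        ZMod.natCast_eq_natCast_iff', Nat.mod_eq_of_lt (by omega), Nat.mod_eq_of_lt (by omega)] at h
      omega

end IsCyclicBraidFamily

/-- Conjugation by `t` shifts the sequence `s 0, …, s k`, and conjugation by `t ^ 2` sends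
`s k` to `s 0`. -/
structure IsRotation {M : Type*} [Monoid M] (k : ℕ) (s : ℕ → M) (t : M) : Prop where
  shift : ∀ i < k, SemiconjBy t (s i) (s (i + 1))
  sq : SemiconjBy (t ^ 2) (s k) (s 0)

section Rotation

variable {M : Type*} [Monoid M] {k : ℕ} {s : ℕ → M} {t : M}

theorem IsRotation.pow_semiconjBy (ht : IsRotation k s t) {j : ℕ} (hj : j ≤ k) :
    SemiconjBy (t ^ j) (s 0) (s j) := by
  induction j with
  | zero => simp
  | succ j ih =>
    rw [pow_succ']
    exact (ht.shift j hj).mul_left (ih (by omega))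

theorem IsRotation.commute_pow (ht : IsRotation k s t) : Commute (t ^ (k + 2)) (s 0) := by
  rw [add_comm, pow_add]
  exact ht.sq.mul_left (ht.pow_semiconjBy le_rfl)

theorem IsBraidSequence.isRotation_succ (h : IsBraidSequence (k + 2) s) :
    IsRotation k (fun i => s (i + 1)) (s 0 * seqProd s (k + 2)) where
  shift i hi := SemiconjBy.mul_left (h.comm 0 (i + 2) (by omega) (by omega))
    (h.seqProd_semiconjBy (by omega) le_rfl)
  sq := by
    have hsq : (s 0 * seqProd s (k + 2)) ^ 2 = s 0 * s 1 * seqProd s (k + 2) ^ 2 := by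
      rw [pow_two, mul_assoc, ← mul_assoc _ (s 0), (h.seqProd_semiconjBy (by omega) le_rfl).eq,
        pow_two]
      simp only [mul_assoc, zero_add]
    have hbraid : SemiconjBy (s 0 * s 1) (s 0) (s 1) := by
      rw [SemiconjBy, h.braid 0 (by omega), mul_assoc]
    rw [hsq]
    exact hbraid.mul_left h.seqProd_sq_semiconjBy

end Rotation

section CyclicConj

variable {G : Type*} [Group G]

/-- The conjugates of `s` by the powers of `t`, indexed by residues modulo `n`. -/
def cyclicConj (n : ℕ) (s t : G) (i : ZMod n) : G :=
  MulAut.conj (t ^ (i.cast : ℤ)) s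

theorem cyclicConj_intCast {n : ℕ} {s t : G} (h : Commute (t ^ n) s) (j : ℤ) :
    cyclicConj n s t j = MulAut.conj (t ^ j) s := by
  have hc : MulAut.conj ((t ^ (n : ℤ)) ^ (j / n)) s = s := by
    rw [zpow_natCast, MulAut.conj_apply, (h.zpow_left _).eq, mul_inv_cancel_right]
  rw [cyclicConj, ZMod.coe_intCast]
  conv_rhs => rw [← Int.emod_add_mul_ediv j n, zpow_add, zpow_mul, map_mul, MulAut.mul_apply, hc]

theorem map_cyclicConj {H : Type*} [Group H] (φ : G →* H) (n : ℕ) (s t : G) (i : ZMod n) :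
    φ (cyclicConj n s t i) = cyclicConj n (φ s) (φ t) i := by
  rw [cyclicConj, cyclicConj, MulAut.conj_apply, MulAut.conj_apply, map_mul, map_mul, map_inv,
    map_zpow]

theorem prodMk_cyclicConj {H : Type*} [Group H] (n : ℕ) (s t : G) (s' t' : H) (i : ZMod n) :
    (cyclicConj n s t i, cyclicConj n s' t' i) = cyclicConj n (s, s') (t, t') i :=
  Prod.ext (map_cyclicConj (MonoidHom.fst G H) n (s, s') (t, t') i).symm
    (map_cyclicConj (MonoidHom.snd G H) n (s, s') (t, t') i).symm

theorem cyclicConj_mem {K : Subgroup G} {s t : G} (hs : s ∈ K) (ht : t ∈ K) {n : ℕ} (i : ZMod n) :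
    cyclicConj n s t i ∈ K :=
  K.mul_mem (K.mul_mem (K.zpow_mem ht _) hs) (K.inv_mem (K.zpow_mem ht _))

theorem cyclicConj_add {n : ℕ} {s t : G} (h : Commute (t ^ n) s) (i j : ZMod n) :
    cyclicConj n s t (i + j) = MulAut.conj (t ^ (i.cast : ℤ)) (cyclicConj n s t j) := by
  have hij := cyclicConj_intCast h (i.cast + j.cast)
  rw [Int.cast_add, ZMod.intCast_zmod_cast, ZMod.intCast_zmod_cast] at hij
  rw [hij, zpow_add, map_mul, MulAut.mul_apply, cyclicConj]

variable {k : ℕ} {s : ℕ → G} {t : G}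

theorem IsRotation.cyclicConj_natCast (ht : IsRotation k s t) {j : ℕ} (hj : j ≤ k) :
    cyclicConj (k + 2) (s 0) t j = s j := by
  have hconj := cyclicConj_intCast ht.commute_pow j
  rw [Int.cast_natCast] at hconj
  rw [hconj, zpow_natCast, MulAut.conj_apply, (ht.pow_semiconjBy hj).eq, mul_inv_cancel_right]

theorem IsRotation.isCyclicBraidFamily_cyclicConj (ht : IsRotation (k + 1) s t)
    (h : IsBraidSequence (k + 2) s) : IsCyclicBraidFamily (cyclicConj (k + 3) (s 0) t) where
  braid i := by
    have hone := ht.cyclicConj_natCast (j := 1) (by omega)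
    rw [Nat.cast_one] at hone
    rw [cyclicConj_add ht.commute_pow, hone, cyclicConj]
    simp only [← map_mul, h.braid 0 (by omega)]
  comm i j hpred hsucc := by
    obtain ⟨d, rfl⟩ : ∃ d, i = j + d := ⟨i - j, by ring⟩
    rw [add_sub_cancel_left] at hpred hsucc
    obtain ⟨d, hd, rfl⟩ : ∃ l < k + 3, d = (l : ℕ) :=
      ⟨d.val, ZMod.val_lt d, (ZMod.natCast_zmod_val d).symm⟩
    have hd_one : d ≠ 1 := by rintro rfl; simp at hpred
    have hd_last : d ≠ k + 2 := by
      rintro rfl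
      apply hsucc
      rw [eq_neg_iff_add_eq_zero, ← Nat.cast_succ, ZMod.natCast_self]
    rw [cyclicConj_add ht.commute_pow, ht.cyclicConj_natCast (by omega), cyclicConj]
    refine Commute.map ?_ (MulAut.conj (t ^ (j.cast : ℤ)))
    rcases Nat.eq_zero_or_pos d with rfl | hd_pos
    · exact Commute.refl _
    · exact (h.comm 0 d (by omega) (by omega)).symm

end CyclicConj

/-! ### The monodromy action -/

/-- The sequence `s 0, …, s (m - 1)` together with `x` satisfies the relations of the annular
braid group, that is, of the Artin group of type `B`. -/
structure IsAnnularSequence {M : Type*} [Monoid M] (m : ℕ) (s : ℕ → M) (x : M) : Prop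
    extends IsBraidSequence m s where
  comm_succ : ∀ i, i + 1 < m → Commute (s (i + 1)) x
  four : Commute (s 0) (x * s 0 * x)

section Annular

variable {G : Type*} [Group G] {m : ℕ} {s : ℕ → G} {x : G}

theorem IsRotation.isAnnularSequence {k : ℕ} {t : G} (ht : IsRotation k s t)
    (h : IsBraidSequence (k + 1) s) :
    IsAnnularSequence (k + 1) s (t * (seqProd s (k + 1))⁻¹) where
  toIsBraidSequence := h
  comm_succ i hi := ((ht.shift i (by omega)).mul_left
    (h.seqProd_semiconjBy hi le_rfl).inv_symm_left).symm
  four := by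
    set P := seqProd s k
    set P' := seqProd (fun i => s (i + 1)) k
    have hδ : seqProd s (k + 1) = P * s k := rfl
    have hδ' : seqProd s (k + 1) = s 0 * P' := seqProd_succ' s k
    have hδP : SemiconjBy (seqProd s (k + 1)) P P' :=
      semiconjBy_seqProd fun i hi => h.seqProd_semiconjBy (by omega) le_rfl
    have htP : SemiconjBy t P P' := semiconjBy_seqProd ht.shift
    have hPP : SemiconjBy (P' * P) (s k) (s 0) := by
      rw [SemiconjBy, mul_assoc, ← hδ, ← hδP.eq, hδ', mul_assoc]
    have hcomm : Commute (t ^ 2 * (P' * P)⁻¹) (s 0) :=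
      SemiconjBy.mul_left ht.sq hPP.inv_symm_left
    have hsq : t ^ 2 * (P' * P)⁻¹ = t * P'⁻¹ * (t * P'⁻¹) := by
      rw [pow_two, mul_inv_rev, mul_assoc, mul_assoc, ← mul_assoc t P⁻¹,
        htP.inv_right.eq, mul_assoc]
    have hfour : t * (seqProd s (k + 1))⁻¹ * s 0 * (t * (seqProd s (k + 1))⁻¹) =
        t ^ 2 * (P' * P)⁻¹ * (s 0)⁻¹ := by
      rw [hsq, hδ']
      group
    rw [hfour]
    exact hcomm.symm.mul_right (Commute.refl _).inv_right

/-- The conjugates `x, s 0 * x * (s 0)⁻¹, …` of `x`. -/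
def conjSeq (s : ℕ → G) (x : G) : ℕ → G
  | 0 => x
  | j + 1 => s j * conjSeq s x j * (s j)⁻¹

theorem conjSeq_succ_mul (i : ℕ) : conjSeq s x (i + 1) * s i = s i * conjSeq s x i := by
  simp [conjSeq]

namespace IsAnnularSequence

theorem commute_conjSeq_of_lt (h : IsAnnularSequence m s x) {i j : ℕ} (hi : i < m) (hj : j < i) :
    Commute (s i) (conjSeq s x j) := by
  induction j with
  | zero =>
    obtain ⟨i, rfl⟩ : ∃ l, i = l + 1 := ⟨i - 1, by omega⟩
    exact h.comm_succ i hi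
  | succ j ih =>
    have hcomm : Commute (s i) (s j) := (h.comm j i (by omega) hi).symm
    exact (hcomm.mul_right (ih (by omega))).mul_right hcomm.inv_right

theorem commute_conjSeq_of_gt (h : IsAnnularSequence m s x) {i j : ℕ} (hj : i + 2 ≤ j)
    (hm : j ≤ m) : Commute (s i) (conjSeq s x j) := by
  induction j, hj using Nat.le_induction with
  | base =>
    have hs : MulAut.conj (s (i + 1) * s i) (s (i + 1)) = s i := by
      rw [MulAut.conj_apply, ← h.braid i (by omega)]
      group
    have hx : MulAut.conj (s (i + 1) * s i) (conjSeq s x i) = conjSeq s x (i + 2) := by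
      simp only [conjSeq, MulAut.conj_apply]
      group
    have := (h.commute_conjSeq_of_lt (by omega) (Nat.lt_succ_self i)).map
      (MulAut.conj (s (i + 1) * s i))
    rwa [hs, hx] at this
  | succ j hj ih =>
    have hcomm : Commute (s i) (s j) := h.comm i j hj (by omega)
    exact (hcomm.mul_right (ih (by omega))).mul_right hcomm.inv_right

theorem commute_conjSeq_mul_mul (h : IsAnnularSequence m s x) {i : ℕ} (hi : i < m) :
    Commute (s i) (conjSeq s x i * s i * conjSeq s x i) := by
  induction i with
  | zero => exact h.four
  | succ i ih =>
    have hs : MulAut.conj (s i * s (i + 1)) (s i) = s (i + 1) := by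
      rw [MulAut.conj_apply, h.braid i hi]
      group
    have hx : MulAut.conj (s i * s (i + 1)) (conjSeq s x i) = conjSeq s x (i + 1) := by
      rw [map_mul, MulAut.mul_apply, MulAut.conj_apply (s (i + 1)),
        (h.commute_conjSeq_of_lt hi (Nat.lt_succ_self i)).eq, mul_inv_cancel_right,
        MulAut.conj_apply, conjSeq]
    generalize MulAut.conj (s i * s (i + 1)) = c at hs hx
    simpa only [map_mul, hs, hx] using (ih (by omega)).map c

theorem commute_conjSeq_mul_conjSeq_succ (h : IsAnnularSequence m s x) {i : ℕ} (hi : i < m) :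
    Commute (s i) (conjSeq s x i * conjSeq s x (i + 1)) := by
  rw [conjSeq, ← mul_assoc, ← mul_assoc]
  exact (h.commute_conjSeq_mul_mul hi).mul_right (Commute.refl _).inv_right

end IsAnnularSequence

/-- The element of the annular braid group traced out by the other `m + 1` strands when the
distinguished strand of a braid on `m + 2` strands starts at position `p` and the `i`-th generator
is applied. A position `p > m + 1` does not exist, and is given the label `1`. -/
def monodromyLabel (m : ℕ) (s : ℕ → G) (x : G) (i p : ℕ) : G :=
  if m + 1 < p then 1
  else if p < i then s (i - 1)
  else if p = i then 1
  else if p = i + 1 then conjSeq s x i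
  else s i

/-- The action of the `i`-th braid generator on `ℕ × G`, where `(p, g)` stands for a distinguished
strand at position `p` together with an element `g` of the annular braid group. -/
def monodromy (m : ℕ) (s : ℕ → G) (x : G) (i : ℕ) : Equiv.Perm (ℕ × G) :=
  Equiv.prodShear (Equiv.swap i (i + 1)) fun p => Equiv.mulLeft (monodromyLabel m s x i p)

theorem monodromy_of_lt {i p : ℕ} (hp : p < i) (hi : i ≤ m) (g : G) :
    monodromy m s x i (p, g) = (p, s (i - 1) * g) := by
  simp [monodromy, monodromyLabel, Equiv.swap_apply_def, hp.ne, show p ≠ i + 1 by omega, hp,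
    show ¬ m + 1 < p by omega]

theorem monodromy_self (i : ℕ) (g : G) : monodromy m s x i (i, g) = (i + 1, g) := by
  simp [monodromy, monodromyLabel]

theorem monodromy_succ {i : ℕ} (hi : i ≤ m) (g : G) :
    monodromy m s x i (i + 1, g) = (i, conjSeq s x i * g) := by
  simp [monodromy, monodromyLabel, hi]

theorem monodromy_of_gt {i p : ℕ} (hp : i + 1 < p) (hpm : p ≤ m + 1) (g : G) :
    monodromy m s x i (p, g) = (p, s i * g) := by
  simp [monodromy, monodromyLabel, Equiv.swap_apply_def, hp.ne', show p ≠ i by omega,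
    show ¬ p < i by omega, show ¬ m + 1 < p by omega]

theorem monodromy_of_add_one_lt {i p : ℕ} (hi : i ≤ m) (hp : m + 1 < p) (g : G) :
    monodromy m s x i (p, g) = (p, g) := by
  simp [monodromy, monodromyLabel, Equiv.swap_apply_def, show p ≠ i by omega,
    show p ≠ i + 1 by omega, hp]

theorem IsAnnularSequence.monodromy_braid (h : IsAnnularSequence m s x) {i : ℕ} (hi : i < m) :
    monodromy m s x i * monodromy m s x (i + 1) * monodromy m s x i =
      monodromy m s x (i + 1) * monodromy m s x i * monodromy m s x (i + 1) := by
  ext1 ⟨p, g⟩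
  obtain hout | hlt | rfl | rfl | rfl | ⟨hgt, hp⟩ :
    m + 1 < p ∨ p < i ∨ p = i ∨ p = i + 1 ∨ p = i + 1 + 1 ∨ (i + 2 < p ∧ p ≤ m + 1) := by omega
  all_goals simp (disch := omega) only [Equiv.Perm.mul_apply, monodromy_of_lt, monodromy_self,
    monodromy_succ, monodromy_of_gt, monodromy_of_add_one_lt, Nat.add_sub_cancel, ← mul_assoc]
  · obtain ⟨i, rfl⟩ : ∃ l, i = l + 1 := ⟨i - 1, by omega⟩
    rw [Nat.add_sub_cancel, h.braid i (by omega)]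
  · rw [conjSeq_succ_mul]
  · rw [← (h.commute_conjSeq_mul_conjSeq_succ hi).eq, ← mul_assoc]
  · rw [h.braid i (by omega)]

theorem IsAnnularSequence.commute_monodromy (h : IsAnnularSequence m s x) {i j : ℕ}
    (hij : i + 2 ≤ j) (hj : j ≤ m) : Commute (monodromy m s x i) (monodromy m s x j) := by
  ext1 ⟨p, g⟩
  obtain hout | hlt | rfl | rfl | ⟨hip, hpj⟩ | rfl | rfl | ⟨hgt, hp⟩ :
    m + 1 < p ∨ p < i ∨ p = i ∨ p = i + 1 ∨ (i + 1 < p ∧ p < j) ∨ p = j ∨ p = j + 1 ∨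
      (j + 1 < p ∧ p ≤ m + 1) := by omega
  all_goals simp (disch := omega) only [Equiv.Perm.mul_apply, monodromy_of_lt, monodromy_self,
    monodromy_succ, monodromy_of_gt, monodromy_of_add_one_lt]
  · rw [(h.comm (i - 1) (j - 1) (by omega) (by omega)).left_comm]
  · rw [(h.commute_conjSeq_of_lt (by omega) (by omega)).left_comm]
  · rw [(h.comm i (j - 1) (by omega) (by omega)).left_comm]
  · rw [(h.commute_conjSeq_of_gt hij hj).left_comm]
  · rw [(h.comm i j hij (by omega)).left_comm]

theorem IsAnnularSequence.isBraidSequence_monodromy (h : IsAnnularSequence m s x) :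
    IsBraidSequence (m + 1) (monodromy m s x) where
  braid _ hi := h.monodromy_braid (by omega)
  comm _ _ hij hj := h.commute_monodromy hij (by omega)

theorem seqProd_monodromy_apply {k : ℕ} (hk : k ≤ m) (g : G) :
    seqProd (fun i => monodromy m s x (i + 1)) k (0, g) = (0, seqProd s k * g) := by
  induction k generalizing g with
  | zero => simp [seqProd]
  | succ k ih =>
    rw [seqProd, Equiv.Perm.mul_apply, monodromy_of_lt (by omega) hk, ih (by omega),
      Nat.add_sub_cancel, seqProd, mul_assoc]

theorem monodromy_zero_mul_seqProd_apply (g : G) :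
    (monodromy m s x 0 * seqProd (monodromy m s x) (m + 1)) (0, g) =
      (0, x * seqProd s m * g) := by
  rw [seqProd_succ', Equiv.Perm.mul_apply, Equiv.Perm.mul_apply, seqProd_monodromy_apply le_rfl,
    monodromy_self, monodromy_succ (Nat.zero_le m), conjSeq, mul_assoc]

/-- The pairs `(π, h)` such that `π` stabilizes the fibre over `0` and acts on it as left
multiplication by `h`. -/
def zeroFiberSubgroup (G : Type*) [Group G] : Subgroup (Equiv.Perm (ℕ × G) × G) where
  carrier := {q | ∀ g, q.1 (0, g) = (0, q.2 * g)}
  one_mem' g := by simp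
  mul_mem' {q r} hq hr g := by
    rw [Prod.fst_mul, Prod.snd_mul, Equiv.Perm.mul_apply, hr g, hq (r.2 * g), mul_assoc]
  inv_mem' {q} hq g := by
    rw [Prod.fst_inv, Equiv.Perm.inv_eq_iff_eq, hq, Prod.snd_inv, mul_inv_cancel_left]

theorem mk_mem_zeroFiberSubgroup {π : Equiv.Perm (ℕ × G)} {h : G} :
    (π, h) ∈ zeroFiberSubgroup G ↔ ∀ g, π (0, g) = (0, h * g) := Iff.rfl

end Annular

/-! ### The affine braid group -/

namespace AffineBraidGroup

theorem isCyclicBraidFamily_gen {n : ℕ} (hn : 2 < n) : IsCyclicBraidFamily (affineBraidGen n) where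
  braid i := (map_braidRelWord_eq_one_iff (PresentedGroup.mk (affineBraidRels n))).1 <|
    PresentedGroup.one_of_mem <| by
      rw [affineBraidRels, if_neg (by omega)]
      exact Or.inl ⟨i, rfl⟩
  comm i j hpred hsucc := (map_commRelWord_eq_one_iff (PresentedGroup.mk (affineBraidRels n))).1 <|
    PresentedGroup.one_of_mem <| by
      rw [affineBraidRels, if_neg (by omega)]
      exact Or.inr ⟨i, j, hpred, hsucc, rfl⟩

/-- The homomorphism out of the affine braid group determined by a cyclic braid family. -/
def lift {H : Type*} [Group H] {n : ℕ} (hn : 2 < n) {f : ZMod n → H}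
    (h : IsCyclicBraidFamily f) : AffineBraidGroup n →* H :=
  PresentedGroup.toGroup (f := f) <| by
    rw [affineBraidRels, if_neg (by omega)]
    rintro _ (⟨i, rfl⟩ | ⟨i, j, hpred, hsucc, rfl⟩)
    · simpa only [map_braidRelWord_eq_one_iff, FreeGroup.lift_apply_of] using h.braid i
    · simpa only [map_commRelWord_eq_one_iff, FreeGroup.lift_apply_of] using h.comm i j hpred hsucc

@[simp]
theorem lift_gen {H : Type*} [Group H] {n : ℕ} (hn : 2 < n) {f : ZMod n → H}
    (h : IsCyclicBraidFamily f) (i : ZMod n) : lift hn h (affineBraidGen n i) = f i :=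
  PresentedGroup.toGroup.of _

/-- The endomorphism of the affine braid group shifting the generators by `c`. -/
def shift {n : ℕ} (hn : 2 < n) (c : ZMod n) : AffineBraidGroup n →* AffineBraidGroup n :=
  lift hn ((isCyclicBraidFamily_gen hn).shift c)

theorem shift_comp_shift {n : ℕ} (hn : 2 < n) {c d : ZMod n} (h : d + c = 0) :
    (shift hn c).comp (shift hn d) = MonoidHom.id _ :=
  PresentedGroup.ext fun i => by
    change shift hn c (shift hn d (affineBraidGen n i)) = affineBraidGen n i
    simp [shift, add_assoc, h]

/-- The automorphism of the affine braid group rotating the affine diagram. -/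
def rotation {n : ℕ} (hn : 2 < n) : MulAut (AffineBraidGroup n) :=
  MonoidHom.toMulEquiv (shift hn 1) (shift hn (-1)) (shift_comp_shift hn (by simp))
    (shift_comp_shift hn (by simp))

theorem rotation_gen {n : ℕ} (hn : 2 < n) (i : ZMod n) :
    rotation hn (affineBraidGen n i) = affineBraidGen n (i + 1) := by
  simp [rotation, shift]

/-- The extension of the affine braid group by the rotation of the affine diagram. -/
abbrev Extended {n : ℕ} (hn : 2 < n) :=
  AffineBraidGroup n ⋊[zpowersHom (MulAut (AffineBraidGroup n)) (rotation hn)] Multiplicative ℤ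

namespace Extended

/-- The generators of the affine braid group as elements of the extended affine braid group. -/
def gen {n : ℕ} (hn : 2 < n) (i : ZMod n) : Extended hn :=
  SemidirectProduct.inl (affineBraidGen n i)

/-- The rotation element of the extended affine braid group. -/
def rot {n : ℕ} (hn : 2 < n) : Extended hn := SemidirectProduct.inr (Multiplicative.ofAdd 1)

theorem semiconjBy_rot_gen {n : ℕ} (hn : 2 < n) (i : ZMod n) :
    SemiconjBy (rot hn) (gen hn i) (gen hn (i + 1)) := by
  have hconj := SemidirectProduct.inl_aut
    (φ := zpowersHom (MulAut (AffineBraidGroup n)) (rotation hn))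
    (Multiplicative.ofAdd 1) (affineBraidGen n i)
  rw [zpowersHom_apply, toAdd_ofAdd, zpow_one, rotation_gen] at hconj
  rw [SemiconjBy, gen, gen, hconj, map_inv, rot, inv_mul_cancel_right]

variable {k : ℕ}

theorem isBraidSequence_gen (hk : 2 < k + 2) : IsBraidSequence (k + 1) fun i => gen hk i :=
  ((isCyclicBraidFamily_gen hk).map SemidirectProduct.inl).isBraidSequence

theorem isRotation_rot (hk : 2 < k + 2) : IsRotation k (fun i => gen hk i) (rot hk) where
  shift i _ := by
    rw [Nat.cast_succ]
    exact semiconjBy_rot_gen hk i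
  sq := by
    have hzero : (k + 1 + 1 : ZMod (k + 2)) = (0 : ℕ) := by
      exact_mod_cast ZMod.natCast_self (k + 2)
    have hsq := (semiconjBy_rot_gen hk (k + 1)).mul_left (semiconjBy_rot_gen hk k)
    rwa [hzero, ← pow_two] at hsq

theorem cyclicConj_rot (hk : 2 < k + 2) (i : ZMod (k + 2)) :
    cyclicConj (k + 2) (gen hk 0) (rot hk) i = gen hk i := by
  have hpow (j : ℕ) : SemiconjBy (rot hk ^ j) (gen hk 0) (gen hk j) := by
    induction j with
    | zero => simp
    | succ j ih =>
      rw [pow_succ', Nat.cast_succ]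
      exact (semiconjBy_rot_gen hk j).mul_left ih
  rw [cyclicConj, ← ZMod.natCast_val, zpow_natCast, MulAut.conj_apply, (hpow _).eq,
    mul_inv_cancel_right, ZMod.natCast_zmod_val]

theorem isAnnularSequence_gen (hk : 2 < k + 2) :
    IsAnnularSequence (k + 1) (fun i => gen hk i)
      (rot hk * (seqProd (fun i => gen hk i) (k + 1))⁻¹) :=
  (isRotation_rot hk).isAnnularSequence (isBraidSequence_gen hk)

/-- The monodromy action of the braid group on `k + 3` strands on `ℕ × Extended hk`. -/
def braidAction (hk : 2 < k + 2) : BraidGroup (k + 2) →* Equiv.Perm (ℕ × Extended hk) :=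
  BraidGroup.lift (isAnnularSequence_gen hk).isBraidSequence_monodromy

theorem braidAction_gen_one_mem (hk : 2 < k + 2) :
    (braidAction hk (BraidGroup.gen (k + 2) 1), gen hk 0) ∈ zeroFiberSubgroup (Extended hk) :=
  mk_mem_zeroFiberSubgroup.2 fun g => by
    rw [braidAction, BraidGroup.lift_gen _ (by omega), monodromy_of_lt (by omega) (by omega),
      Nat.sub_self, Nat.cast_zero]

theorem braidAction_rot_mem (hk : 2 < k + 2) :
    (braidAction hk (BraidGroup.gen (k + 2) 0 * seqProd (BraidGroup.gen (k + 2)) (k + 2)), rot hk) ∈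
      zeroFiberSubgroup (Extended hk) :=
  mk_mem_zeroFiberSubgroup.2 fun g => by
    have hlift := fun i => BraidGroup.lift_gen (i := i)
      (isAnnularSequence_gen hk).isBraidSequence_monodromy
    rw [map_mul, braidAction, hlift 0 (by omega), map_seqProd _ hlift,
      monodromy_zero_mul_seqProd_apply, inv_mul_cancel_right]

end Extended

/-- The embedding of the affine braid group into the braid group with generators
`σ₀, …, σ_{k + 2}`: the affine generators become the conjugates of `σ₁` by the powers of
`σ₀ * (σ₀ * σ₁ * ⋯ * σ_{k + 2})`. -/
def toBraid (k : ℕ) : AffineBraidGroup (k + 3) →* BraidGroup (k + 3) :=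
  lift (by omega) <|
    (BraidGroup.isBraidSequence_gen (k + 3)).isRotation_succ.isCyclicBraidFamily_cyclicConj
      (BraidGroup.isBraidSequence_gen (k + 3)).tail

theorem braidAction_toBraid_mem {k : ℕ} (hk : 2 < k + 3) (a : AffineBraidGroup (k + 3)) :
    (Extended.braidAction hk (toBraid k a), SemidirectProduct.inl a) ∈
      zeroFiberSubgroup (Extended hk) := by
  set K := zeroFiberSubgroup (Extended hk)
  refine PresentedGroup.generated_by (affineBraidRels (k + 3))
    (K.comap (((Extended.braidAction hk).comp (toBraid k)).prod SemidirectProduct.inl))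
    (fun i => ?_) a
  change (Extended.braidAction hk (toBraid k (affineBraidGen _ i)), Extended.gen hk i) ∈ K
  rw [toBraid, lift_gen, map_cyclicConj, ← Extended.cyclicConj_rot, prodMk_cyclicConj]
  exact cyclicConj_mem (Extended.braidAction_gen_one_mem hk) (Extended.braidAction_rot_mem hk) i

theorem toBraid_injective (k : ℕ) : Function.Injective (toBraid k) := by
  refine (injective_iff_map_eq_one _).2 fun a ha => ?_
  have hk : 2 < k + 3 := by omega
  have hmem := braidAction_toBraid_mem hk a
  rw [ha, map_one, mk_mem_zeroFiberSubgroup] at hmem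
  have hinl : (SemidirectProduct.inl a : Extended hk) = 1 := by
    simpa using (congrArg Prod.snd (hmem 1)).symm
  exact SemidirectProduct.inl_injective (hinl.trans (map_one _).symm)

theorem mk_injective_of_le_two {n : ℕ} (hn : n ≤ 2) :
    Function.Injective (PresentedGroup.mk (affineBraidRels n)) := by
  rw [injective_iff_map_eq_one, affineBraidRels, if_pos hn]
  intro w hw
  rwa [PresentedGroup.mk_eq_one_iff, Subgroup.normalClosure_empty, Subgroup.mem_bot] at hw

end AffineBraidGroup

/-- For every `n ≥ 2`, the affine braid group `B(Ã_{n−1})` is torsion-free: if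
`g ∈ B(Ã_{n−1})` and `g ^ k = 1` for some integer `k ≥ 1`, then `g = 1`. -/
theorem affineBraidGroup_torsionFree (n : ℕ) (hn : 2 ≤ n)
    (g : AffineBraidGroup n) (k : ℕ) (hk : 1 ≤ k) (h : g ^ k = 1) : g = 1 := by
  have hk_ne : k ≠ 0 := by omega
  rcases le_or_gt n 2 with hle | hlt
  · obtain ⟨w, rfl⟩ := PresentedGroup.mk_surjective _ g
    have hw : w ^ k = 1 :=
      AffineBraidGroup.mk_injective_of_le_two hle (by rw [map_pow, h, map_one])
    rw [(pow_eq_one_iff_left hk_ne).1 hw, map_one]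
  · obtain ⟨m, rfl⟩ : ∃ m, n = m + 3 := ⟨n - 3, by omega⟩
    apply AffineBraidGroup.toBraid_injective m
    rw [map_one]
    exact BraidGroup.eq_one_of_pow_eq_one hk_ne (by rw [← map_pow, h, map_one])
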